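/- Let X, Y ⊆ ω. There exists an embedding of pcas of B^X into B^Y if and only if X is Turing reducible to Y. -/

import Mathlib

namespace PCAEmb

/-! ### Oracle computability -/

/-- Codes for partial functions computable relative to an oracle. -/
inductive OCode : Type
  | zero : OCode
  | succ : OCode
  | left : OCode
  | right : OCode
  | oracle : OCode
  | pair : OCode → OCode → OCode
  | comp : OCode → OCode → OCode
  | prec : OCode → OCode → OCode
  | rfind' : OCode → OCode

/-- Evaluation of an oracle code, relative to a (partial) oracle `O`. -/
def evalo (O : ℕ →. ℕ) : OCode → ℕ →. ℕ
  | .zero => pure 0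
  | .succ => Nat.succ
  | .left => ↑fun n : ℕ => n.unpair.1
  | .right => ↑fun n : ℕ => n.unpair.2
  | .oracle => O
  | .pair cf cg => fun n => Nat.pair <$> evalo O cf n <*> evalo O cg n
  | .comp cf cg => fun n => evalo O cg n >>= evalo O cf
  | .prec cf cg =>
      Nat.unpaired fun a n =>
        n.rec (evalo O cf a) fun y IH => do
          let i ← IH
          evalo O cg (Nat.pair a (Nat.pair y i))
  | .rfind' cf =>
      Nat.unpaired fun a m =>
        (Nat.rfind fun n => (fun x => x = 0) <$> evalo O cf (Nat.pair a (n + m))).map (· + m)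

/-- The standard numbering of oracle codes. -/
def OCode.ofNat : ℕ → OCode
  | 0 => .zero
  | 1 => .succ
  | 2 => .left
  | 3 => .right
  | 4 => .oracle
  | n + 5 =>
    match n % 4 with
    | 0 => .pair (OCode.ofNat (n / 4).unpair.1) (OCode.ofNat (n / 4).unpair.2)
    | 1 => .comp (OCode.ofNat (n / 4).unpair.1) (OCode.ofNat (n / 4).unpair.2)
    | 2 => .prec (OCode.ofNat (n / 4).unpair.1) (OCode.ofNat (n / 4).unpair.2)
    | _ => .rfind' (OCode.ofNat (n / 4).unpair.1)
  decreasing_by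
    all_goals
      have h1 := Nat.unpair_left_le (n / 4)
      have h2 := Nat.unpair_right_le (n / 4)
      have h3 := Nat.div_le_self n 4
      omega

/-- The `e`-th Turing functional with oracle `O` : `Φ_e^O`. -/
def phi (O : ℕ →. ℕ) (e : ℕ) : ℕ →. ℕ := evalo O (OCode.ofNat e)

/-- The characteristic function of a set of naturals, as a (total) partial function. -/
noncomputable def chi (X : Set ℕ) : ℕ →. ℕ :=
  fun n => Part.some (X.indicator (fun _ => 1) n)

/-- `ψ` is partial computable relative to the oracle `O`. -/
def RecursiveIn (O : ℕ →. ℕ) (ψ : ℕ →. ℕ) : Prop := ∃ c : OCode, evalo O c = ψ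

/-- Turing reducibility of sets of naturals. -/
def TuringLE (X Y : Set ℕ) : Prop := RecursiveIn (chi Y) (chi X)

/-- A total function `d : ℕ → ℕ` is `Y`-computable. -/
def ComputableIn (Y : Set ℕ) (d : ℕ → ℕ) : Prop :=
  RecursiveIn (chi Y) (fun n => Part.some (d n))

/-- A binary relation on `ℕ` is `Y`-c.e. -/
def CEIn (Y : Set ℕ) (R : ℕ → ℕ → Prop) : Prop :=
  ∃ c : OCode, ∀ n m, R n m ↔ (evalo (chi Y) c (Nat.pair n m)).Dom

/-- A set `W ⊆ ℕ` is `Y`-c.e. -/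
def CE1In (Y : Set ℕ) (W : Set ℕ) : Prop :=
  ∃ c : OCode, ∀ n, n ∈ W ↔ (evalo (chi Y) c n).Dom

/-- The canonical finite set `D_u` with code `u` (binary coding). -/
def Du (u : ℕ) : Set ℕ := {k | u.testBit k}

/-- Enumeration reducibility: `Z ≤ₑ Y`. -/
def EnumLE (Z Y : Set ℕ) : Prop :=
  ∃ W : Set ℕ, CE1In ∅ W ∧ ∀ x, x ∈ Z ↔ ∃ u, Nat.pair x u ∈ W ∧ Du u ⊆ Y

/-- The Turing jump `X'` of a set `X`. -/
def jump (X : Set ℕ) : Set ℕ := {e | (phi (chi X) e e).Dom}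

/-- The halting set `K = {e : φ_e(e)↓}`. -/
def Khalt : Set ℕ := jump ∅

/-! ### Partial combinatory algebras -/

/-- `k·a·b` as a partial element. -/
def app2 {α : Type*} (app : α → α → Part α) (a b c : α) : Part α :=
  (app a b).bind fun x => app x c

/-- `s·a·b·c` as a partial element. -/
def app3 {α : Type*} (app : α → α → Part α) (a b c d : α) : Part α :=
  (app2 app a b c).bind fun x => app x d

/-- A partial applicative structure is a pca if it has (distinct) combinators `s` and `k`. -/
def IsPCA {α : Type*} (app : α → α → Part α) : Prop :=
  ∃ s k : α, s ≠ k ∧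
    (∀ a b : α, app2 app k a b = Part.some a) ∧
    (∀ a b : α, (app2 app s a b).Dom) ∧
    (∀ a b c : α,
      app3 app s a b c = (app a c).bind fun x => (app b c).bind fun y => app x y)

/-- An embedding of partial combinatory algebras: an injection that preserves
(defined) application. -/
def IsPCAEmbedding {α β : Type*} (appA : α → α → Part α) (appB : β → β → Part β)
    (f : α → β) : Prop :=
  Function.Injective f ∧ ∀ a a' c : α, c ∈ appA a a' → f c ∈ appB (f a) (f a')

/-! ### Partial numberings -/

/-- `γ : ℕ ⇀ α` is a partial numbering (i.e. surjective). -/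
def IsNumbering {α : Type*} (γ : ℕ →. α) : Prop := ∀ a : α, ∃ n, a ∈ γ n

/-- `d` is an `(a⊥, a⊤)`-decider for `X` with respect to `γ`. -/
def IsDecider {α : Type*} (γ : ℕ →. α) (abot atop : α) (X : Set ℕ) (d : ℕ → ℕ) : Prop :=
  ∀ n, (n ∉ X → γ (d n) = Part.some abot) ∧ (n ∈ X → γ (d n) = Part.some atop)

/-- `γ` has `Y`-c.e. inequivalence. -/
def CEInequiv {α : Type*} (Y : Set ℕ) (γ : ℕ →. α) : Prop :=
  ∃ R : ℕ → ℕ → Prop, CEIn Y R ∧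
    ∀ n m, (γ n).Dom → (γ m).Dom → (R n m ↔ γ n ≠ γ m)

/-- `γ` is a `Y`-effectively pca-valued partial numbering: the application is
represented on codes by a partial `Y`-computable function `ψ`. -/
def EffValued {α : Type*} (Y : Set ℕ) (app : α → α → Part α) (γ : ℕ →. α) : Prop :=
  ∃ ψ : ℕ →. ℕ, RecursiveIn (chi Y) ψ ∧
    ∀ (n m : ℕ) (a b c : α), a ∈ γ n → b ∈ γ m → c ∈ app a b →
      ∃ j, j ∈ ψ (Nat.pair n m) ∧ c ∈ γ j

/-- `γ` is a strongly `Y`-effectively pca-valued partial numbering. -/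
def StrongEffValued {α : Type*} (Y : Set ℕ) (app : α → α → Part α) (γ : ℕ →. α) : Prop :=
  ∃ ψ : ℕ →. ℕ, RecursiveIn (chi Y) ψ ∧
    (∀ (n m : ℕ) (a b c : α), a ∈ γ n → b ∈ γ m → c ∈ app a b →
      ∃ j, j ∈ ψ (Nat.pair n m) ∧ c ∈ γ j) ∧
    (∀ (n m k l : ℕ) (a b a' b' c : α), a ∈ γ n → b ∈ γ m → a' ∈ γ k → b' ∈ γ l →
      c ∈ app a b → c ∈ app a' b' → ψ (Nat.pair n m) = ψ (Nat.pair k l))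

/-! ### The models -/

/-- Kleene's first model relativized to `X`: application `n · m = Φ_n^X(m)`. -/
noncomputable def k1App (X : Set ℕ) : ℕ → ℕ → Part ℕ := fun n m => phi (chi X) n m

/-- A total function as a partial function. -/
def toPFun (g : ℕ → ℕ) : ℕ →. ℕ := fun n => Part.some (g n)

/-- Join `f ⊕ g` of two partial functions. -/
def pjoin (f g : ℕ →. ℕ) : ℕ →. ℕ := fun n =>
  if n % 2 = 0 then f (n / 2) else g (n / 2)

/-- The totalization of a partial function, as a partial element of `ℕ → ℕ`:
defined iff `ψ` is total. -/
def partToTotal (ψ : ℕ →. ℕ) : Part (ℕ → ℕ) :=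
  ⟨∀ n, (ψ n).Dom, fun H n => (ψ n).get (H n)⟩

/-- Application in Kleene's second model `K₂`: `g · h = Φ^{g⊕h}_{g 0}`,
defined iff this function is total. -/
def k2App (g h : ℕ → ℕ) : Part (ℕ → ℕ) :=
  partToTotal (phi (pjoin (toPFun g) (toPFun h)) (g 0))

/-- Application in van Oosten's sequential model `B`: `θ · ρ = Φ^{θ⊕ρ}_{θ 0}`
(always defined, as a partial function). -/
def bApp (θ ρ : ℕ →. ℕ) : Part (ℕ →. ℕ) :=
  Part.some (fun n => (θ 0).bind fun e => phi (pjoin θ ρ) e n)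

/-- Restriction of a partial applicative structure to a subset. -/
def subApp {α : Type*} (app : α → α → Part α) (P : α → Prop)
    (a b : Subtype P) : Part (Subtype P) :=
  (app a.1 b.1).bind fun c => Part.assert (P c) fun h => Part.some ⟨c, h⟩

/-- Carrier of `K₂^X` : the total `X`-computable functions. -/
def K2el (X : Set ℕ) : Type := {g : ℕ → ℕ // RecursiveIn (chi X) (toPFun g)}

/-- Application in `K₂^X`. -/
def k2XApp (X : Set ℕ) : K2el X → K2el X → Part (K2el X) :=
  subApp k2App _

/-- Carrier of `B^X` : the partial `X`-computable functions. -/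
def Bel (X : Set ℕ) : Type := {θ : ℕ →. ℕ // RecursiveIn (chi X) θ}

/-- Application in `B^X`. -/
def bXApp (X : Set ℕ) : Bel X → Bel X → Part (Bel X) :=
  subApp bApp _

/-- Application in Scott's graph model `G`. -/
def gApp (A B : Set ℕ) : Part (Set ℕ) :=
  Part.some {n | ∃ u, Nat.pair n u ∈ A ∧ Du u ⊆ B}

/-- Carrier of `G^Z` : the sets enumeration-reducible to `Z`. -/
def Gel (Z : Set ℕ) : Type := {A : Set ℕ // EnumLE A Z}

/-- Application in `G^Z`. -/
def gXApp (Z : Set ℕ) : Gel Z → Gel Z → Part (Gel Z) :=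
  subApp gApp _

/-- `X ⊕ X̄ = {2n : n ∈ X} ∪ {2n+1 : n ∉ X}`. -/
def joinCompl (X : Set ℕ) : Set ℕ :=
  {k | ∃ n, (k = 2 * n ∧ n ∈ X) ∨ (k = 2 * n + 1 ∧ n ∉ X)}

/-! ### The λ-calculus -/

/-- Untyped λ-terms (de Bruijn representation). -/
inductive Lam : Type
  | var : ℕ → Lam
  | app : Lam → Lam → Lam
  | abs : Lam → Lam

/-- Lift (shift up) the free variables `≥ d` of a term. -/
def Lam.lift : Lam → ℕ → Lam
  | .var n, d => if n < d then .var n else .var (n + 1)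
  | .app M N, d => .app (M.lift d) (N.lift d)
  | .abs M, d => .abs (M.lift (d + 1))

/-- Substitution `M[k := N]` (de Bruijn). -/
def Lam.subst : Lam → ℕ → Lam → Lam
  | .var n, k, N => if n = k then N else if k < n then .var (n - 1) else .var n
  | .app M M', k, N => .app (M.subst k N) (M'.subst k N)
  | .abs M, k, N => .abs (M.subst (k + 1) (N.lift 0))

/-- β-equivalence of λ-terms. -/
inductive BetaEq : Lam → Lam → Prop
  | beta (M N : Lam) : BetaEq (.app (.abs M) N) (M.subst 0 N)
  | refl (M : Lam) : BetaEq M M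
  | symm {M N : Lam} : BetaEq M N → BetaEq N M
  | trans {M N P : Lam} : BetaEq M N → BetaEq N P → BetaEq M P
  | appCongr {M M' N N' : Lam} :
      BetaEq M M' → BetaEq N N' → BetaEq (.app M N) (.app M' N')
  | absCongr {M M' : Lam} : BetaEq M M' → BetaEq (.abs M) (.abs M')

/-- βη-equivalence of λ-terms. -/
inductive BetaEtaEq : Lam → Lam → Prop
  | beta (M N : Lam) : BetaEtaEq (.app (.abs M) N) (M.subst 0 N)
  | eta (M : Lam) : BetaEtaEq (.abs (.app (M.lift 0) (.var 0))) M
  | refl (M : Lam) : BetaEtaEq M M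
  | symm {M N : Lam} : BetaEtaEq M N → BetaEtaEq N M
  | trans {M N P : Lam} : BetaEtaEq M N → BetaEtaEq N P → BetaEtaEq M P
  | appCongr {M M' N N' : Lam} :
      BetaEtaEq M M' → BetaEtaEq N N' → BetaEtaEq (.app M N) (.app M' N')
  | absCongr {M M' : Lam} : BetaEtaEq M M' → BetaEtaEq (.abs M) (.abs M')

def lamBetaSetoid : Setoid Lam := ⟨BetaEq, ⟨BetaEq.refl, BetaEq.symm, BetaEq.trans⟩⟩

def lamBetaEtaSetoid : Setoid Lam :=
  ⟨BetaEtaEq, ⟨BetaEtaEq.refl, BetaEtaEq.symm, BetaEtaEq.trans⟩⟩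

/-- The pca `λ` of λ-terms modulo β-equivalence. -/
def LamBeta : Type := Quotient lamBetaSetoid

/-- The pca `λη` of λ-terms modulo βη-equivalence. -/
def LamBetaEta : Type := Quotient lamBetaEtaSetoid

/-- Application in `λ` (total). -/
def lamBetaApp : LamBeta → LamBeta → Part LamBeta := fun a b =>
  Part.some (Quotient.map₂ Lam.app (fun _ _ h1 _ _ h2 => BetaEq.appCongr h1 h2) a b)

/-- Application in `λη` (total). -/
def lamBetaEtaApp : LamBetaEta → LamBetaEta → Part LamBetaEta := fun a b =>
  Part.some (Quotient.map₂ Lam.app (fun _ _ h1 _ _ h2 => BetaEtaEq.appCongr h1 h2) a b)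


/-!
If `X ≤_T Y`, then `B^X` is contained in `B^Y`. Conversely, any homomorphism `f` with `f a ≠ f b`
for some `a` and `b` already forces `X ≤_T Y`. Since `n + 1` is obtained from `n` by applying a
fixed element `S` of `B^X`, the image of the numeral `n` is `(f S)^n (f 0)`, so these images form a
uniformly `Y`-computable sequence of partial functions. Some `D` in `B^X` sends the numeral `n` to
`a` if `n ∈ X` and to `b` otherwise; hence `f D · f n` is `f a` or `f b` according to `n ∈ X`. If
the graphs of `f a` and `f b` differ in the pair `(m, v)`, say `f a m = v`, then waiting for `v` to
appear as the value of `f D · f n` at `m` semidecides `n ∈ X`. Exchanging `a` and `b` in `D`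
semidecides the complement, and Post's theorem applies.

Uniformity requires codes for partial functions, but application in `B` consumes the whole graph
of its arguments. A `Y`-computable partial function is therefore represented by plain codes for
its approximations, which are computed from finite initial segments of the characteristic function
of `Y`; by continuity, application acts effectively on such codes.
-/

open Encodable Filter
open Nat.Partrec (Code)

/-! ### Evaluation of oracle codes -/

section Evaluation

variable {O : ℕ →. ℕ} {a b : OCode} {x y p n m : ℕ}

theorem mem_evalo_oracle : y ∈ evalo O .oracle x ↔ y ∈ O x := Iff.rfl

theorem mem_evalo_pair :
    y ∈ evalo O (.pair a b) x ↔ ∃ u ∈ evalo O a x, ∃ v ∈ evalo O b x, Nat.pair u v = y := by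
  simp [evalo, Seq.seq]

theorem mem_evalo_comp :
    y ∈ evalo O (.comp a b) x ↔ ∃ u ∈ evalo O b x, y ∈ evalo O a u :=
  Part.mem_bind_iff

theorem mem_evalo_prec_zero :
    y ∈ evalo O (.prec a b) (Nat.pair p 0) ↔ y ∈ evalo O a p := by
  simp [evalo]

theorem mem_evalo_prec_succ :
    y ∈ evalo O (.prec a b) (Nat.pair p (n + 1)) ↔
      ∃ i ∈ evalo O (.prec a b) (Nat.pair p n), y ∈ evalo O b (Nat.pair p (Nat.pair n i)) := by
  simp [evalo]

theorem mem_evalo_rfind' :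
    y ∈ evalo O (.rfind' a) (Nat.pair p m) ↔
      ∃ n, (0 ∈ evalo O a (Nat.pair p (n + m)) ∧
        ∀ k < n, ∃ z ∈ evalo O a (Nat.pair p (k + m)), z ≠ 0) ∧ n + m = y := by
  simp only [evalo, Nat.unpaired, Nat.unpair_pair, Part.mem_map_iff]
  refine exists_congr fun n => and_congr_left fun _ => Nat.mem_rfind.trans ?_
  simp

theorem OCode.ofNat_surjective : Function.Surjective OCode.ofNat := by
  intro c
  induction c with
  | zero => exact ⟨0, by simp only [OCode.ofNat]⟩
  | succ => exact ⟨1, by simp only [OCode.ofNat]⟩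
  | left => exact ⟨2, by simp only [OCode.ofNat]⟩
  | right => exact ⟨3, by simp only [OCode.ofNat]⟩
  | oracle => exact ⟨4, by simp only [OCode.ofNat]⟩
  | pair a b ha hb =>
    obtain ⟨⟨n, rfl⟩, ⟨m, rfl⟩⟩ := ha, hb
    refine ⟨4 * Nat.pair n m + 5, by simp [OCode.ofNat]⟩
  | comp a b ha hb =>
    obtain ⟨⟨n, rfl⟩, ⟨m, rfl⟩⟩ := ha, hb
    refine ⟨4 * Nat.pair n m + 1 + 5, by simp [OCode.ofNat, Nat.mul_add_div]⟩
  | prec a b ha hb =>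
    obtain ⟨⟨n, rfl⟩, ⟨m, rfl⟩⟩ := ha, hb
    refine ⟨4 * Nat.pair n m + 2 + 5, by simp [OCode.ofNat, Nat.mul_add_div]⟩
  | rfind' a ha =>
    obtain ⟨n, rfl⟩ := ha
    refine ⟨4 * Nat.pair n 0 + 3 + 5, by simp [OCode.ofNat, Nat.mul_add_div]⟩

end Evaluation

theorem exists_forall_evalo_eq_eval (d : Code) : ∃ c : OCode, ∀ O, evalo O c = d.eval := by
  induction d with
  | zero => exact ⟨.zero, fun _ => rfl⟩
  | succ => exact ⟨.succ, fun _ => rfl⟩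
  | left => exact ⟨.left, fun _ => rfl⟩
  | right => exact ⟨.right, fun _ => rfl⟩
  | pair _ _ ha hb =>
    obtain ⟨⟨a, ha⟩, ⟨b, hb⟩⟩ := ha, hb
    exact ⟨.pair a b, fun O => by rw [evalo, ha, hb]; rfl⟩
  | comp _ _ ha hb =>
    obtain ⟨⟨a, ha⟩, ⟨b, hb⟩⟩ := ha, hb
    exact ⟨.comp a b, fun O => by rw [evalo, ha, hb]; rfl⟩
  | prec _ _ ha hb =>
    obtain ⟨⟨a, ha⟩, ⟨b, hb⟩⟩ := ha, hb
    exact ⟨.prec a b, fun O => by rw [evalo, ha, hb]; rfl⟩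
  | rfind' _ ha =>
    obtain ⟨a, ha⟩ := ha
    exact ⟨.rfind' a, fun O => by rw [evalo, ha]; rfl⟩

theorem exists_forall_evalo_eq {ψ : ℕ →. ℕ} (hψ : Nat.Partrec ψ) :
    ∃ c : OCode, ∀ O, evalo O c = ψ := by
  obtain ⟨d, rfl⟩ := Code.exists_code.1 hψ
  exact exists_forall_evalo_eq_eval d

theorem exists_forall_evalo_eq_some {h : ℕ → ℕ} (hh : Computable h) :
    ∃ c : OCode, ∀ O n, evalo O c n = Part.some (h n) :=
  (exists_forall_evalo_eq (Partrec.nat_iff.1 hh)).imp fun _ hc O n => congrFun (hc O) n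

/-! ### Closure properties of relative computability -/

namespace RecursiveIn

variable {O P ψ : ℕ →. ℕ} {g h : ℕ → ℕ}

protected theorem refl (O : ℕ →. ℕ) : RecursiveIn O O := ⟨.oracle, rfl⟩

protected theorem trans (hP : RecursiveIn O P) (hψ : RecursiveIn P ψ) : RecursiveIn O ψ := by
  obtain ⟨c, rfl⟩ := hψ
  induction c with
  | zero => exact ⟨.zero, rfl⟩
  | succ => exact ⟨.succ, rfl⟩
  | left => exact ⟨.left, rfl⟩
  | right => exact ⟨.right, rfl⟩
  | oracle => exact hP
  | pair _ _ ha hb =>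
    obtain ⟨⟨a, ha⟩, ⟨b, hb⟩⟩ := ha, hb
    exact ⟨.pair a b, by rw [evalo, ha, hb]; rfl⟩
  | comp _ _ ha hb =>
    obtain ⟨⟨a, ha⟩, ⟨b, hb⟩⟩ := ha, hb
    exact ⟨.comp a b, by rw [evalo, ha, hb]; rfl⟩
  | prec _ _ ha hb =>
    obtain ⟨⟨a, ha⟩, ⟨b, hb⟩⟩ := ha, hb
    exact ⟨.prec a b, by rw [evalo, ha, hb]; rfl⟩
  | rfind' _ ha =>
    obtain ⟨a, ha⟩ := ha
    exact ⟨.rfind' a, by rw [evalo, ha]; rfl⟩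

theorem toPFun_of_computable (hh : Computable h) : RecursiveIn O (toPFun h) :=
  (exists_forall_evalo_eq_some hh).imp fun _ hc => funext (hc O)

theorem comp (hψ : RecursiveIn O ψ) (hh : RecursiveIn O (toPFun h)) :
    RecursiveIn O fun n => ψ (h n) := by
  obtain ⟨⟨a, rfl⟩, ⟨b, hb⟩⟩ := hψ, hh
  exact ⟨.comp a b, funext fun n => by rw [evalo, hb]; exact Part.bind_some _ _⟩

theorem toPFun_comp (hg : RecursiveIn O (toPFun g)) (hh : RecursiveIn O (toPFun h)) :
    RecursiveIn O (toPFun fun n => g (h n)) :=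
  hg.comp hh

theorem toPFun_pair (hg : RecursiveIn O (toPFun g)) (hh : RecursiveIn O (toPFun h)) :
    RecursiveIn O (toPFun fun n => Nat.pair (g n) (h n)) := by
  obtain ⟨⟨a, ha⟩, ⟨b, hb⟩⟩ := hg, hh
  exact ⟨.pair a b, funext fun n => by simp [evalo, ha, hb, toPFun, Seq.seq]⟩

theorem toPFun_comp₂ {k : ℕ → ℕ → ℕ} (hk : Computable₂ k) (hg : RecursiveIn O (toPFun g))
    (hh : RecursiveIn O (toPFun h)) : RecursiveIn O (toPFun fun n => k (g n) (h n)) := by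
  have hk' : Computable (Nat.unpaired k) :=
    hk.comp (Computable.fst.comp Computable.unpair) (Computable.snd.comp Computable.unpair)
  simpa only [Nat.unpaired, Nat.unpair_pair] using
    (toPFun_of_computable hk').toPFun_comp (hg.toPFun_pair hh)

theorem toPFun_natRec {r : ℕ → ℕ → ℕ} (z : ℕ) (hr : RecursiveIn O (toPFun (Nat.unpaired r))) :
    RecursiveIn O (toPFun fun n => Nat.rec z r n) := by
  obtain ⟨a, ha⟩ := toPFun_of_computable (O := O) (Computable.const z)
  have hr' : RecursiveIn O (toPFun fun q => Nat.unpaired r q.unpair.2) :=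
    hr.comp (toPFun_of_computable (Computable.snd.comp Computable.unpair))
  obtain ⟨b, hb⟩ := hr'
  obtain ⟨i, hi⟩ := toPFun_pair (O := O) (toPFun_of_computable (Computable.const 0))
    (toPFun_of_computable Computable.id)
  have prec_eq (n : ℕ) : Nat.rec z r n ∈ evalo O (.prec a b) (Nat.pair 0 n) := by
    induction n with
    | zero => exact mem_evalo_prec_zero.2 (by simp [ha, toPFun])
    | succ n ih => exact mem_evalo_prec_succ.2 ⟨_, ih, by simp [hb, toPFun]⟩
  exact ⟨.comp (.prec a b) i, funext fun n => Part.eq_some_iff.2 <|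
    mem_evalo_comp.2 ⟨_, by rw [hi]; exact Part.mem_some _, prec_eq n⟩⟩

theorem guard (hψ : RecursiveIn O ψ) (hh : RecursiveIn O (toPFun h)) :
    RecursiveIn O fun n => if h n = 0 then Part.some 0 else ψ n := by
  obtain ⟨⟨a, rfl⟩, ⟨i, hi⟩⟩ := hψ, (toPFun_of_computable Computable.id).toPFun_pair hh
  -- Recursion on `h n` leaves `ψ n` unevaluated where `h n = 0`, so it may diverge there.
  have prec_eq (p n : ℕ) : evalo O (.prec .zero (.comp a .left)) (Nat.pair p n) =
      if n = 0 then Part.some 0 else evalo O a p := by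
    induction n with
    | zero => exact Part.ext fun y => mem_evalo_prec_zero.trans Iff.rfl
    | succ n ih =>
      refine Part.ext fun y => mem_evalo_prec_succ.trans ?_
      have hstep (i : ℕ) : evalo O (.comp a .left) (Nat.pair p (Nat.pair n i)) = evalo O a p :=
        (Part.bind_some _ _).trans (congrArg (evalo O a ∘ Prod.fst) (Nat.unpair_pair _ _))
      simp only [ih, hstep, exists_and_right, n.succ_ne_zero, if_false]
      refine and_iff_right_of_imp fun hy => ?_
      split_ifs
      exacts [⟨0, Part.mem_some 0⟩, ⟨y, hy⟩]
  exact ⟨.comp (.prec .zero (.comp a .left)) i, funext fun n => by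
    rw [evalo, hi]; exact (Part.bind_some _ _).trans (prec_eq n (h n))⟩

theorem ite {φ ψ : ℕ →. ℕ} (hφ : RecursiveIn O φ) (hψ : RecursiveIn O ψ)
    (hh : RecursiveIn O (toPFun h)) :
    RecursiveIn O fun n => if h n = 0 then φ n else ψ n := by
  have hsub : RecursiveIn O (toPFun fun n => 1 - h n) :=
    toPFun_comp₂ Primrec.nat_sub.to_comp (toPFun_of_computable (Computable.const 1)) hh
  have hadd : Computable (Nat.unpaired (· + ·)) :=
    (Primrec.nat_add.comp (Primrec.fst.comp Primrec.unpair)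
      (Primrec.snd.comp Primrec.unpair)).to_comp
  -- In the sum of the two guarded branches, the one not selected contributes `0`.
  obtain ⟨a, ha⟩ := hφ.guard hsub
  obtain ⟨b, hb⟩ := hψ.guard hh
  obtain ⟨c, hc⟩ := exists_forall_evalo_eq_some hadd
  refine ⟨.comp c (.pair a b), funext fun n => Part.ext fun y => ?_⟩
  simp only [mem_evalo_comp, mem_evalo_pair, ha, hb, hc]
  by_cases hn : h n = 0
  · simp [hn]
  · simp [hn, Nat.sub_eq_zero_of_le (Nat.one_le_iff_ne_zero.2 hn)]

theorem toPFun_find (hg : RecursiveIn O (toPFun g)) (hex : ∀ n, ∃ t, g (Nat.pair n t) = 0) :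
    RecursiveIn O (toPFun fun n => Nat.find (hex n)) := by
  obtain ⟨a, ha⟩ := hg
  obtain ⟨i, hi⟩ := toPFun_pair (O := O) (toPFun_of_computable Computable.id)
    (toPFun_of_computable (Computable.const 0))
  refine ⟨.comp (.rfind' a) i, funext fun n => Part.eq_some_iff.2 <|
    mem_evalo_comp.2 ⟨_, by rw [hi]; exact Part.mem_some _, mem_evalo_rfind'.2 ?_⟩⟩
  refine ⟨_, ⟨?_, fun k hk => ⟨_, by rw [ha]; exact Part.mem_some _, ?_⟩⟩, rfl⟩
  · rw [ha]
    exact Part.mem_some_iff.2 (Nat.find_spec (hex n)).symm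
  · exact Nat.find_min (hex n) hk

end RecursiveIn

/-- `P` is semidecidable relative to `O`: it is the projection of an `O`-decidable binary relation,
presented as the zero set of a total `O`-computable function. With this presentation, rather than
as the domain of a partial function, Post's theorem needs a single unbounded search. -/
def SemidecidableIn (O : ℕ →. ℕ) (P : ℕ → Prop) : Prop :=
  ∃ q : ℕ → ℕ, RecursiveIn O (toPFun q) ∧ ∀ n, P n ↔ ∃ t, q (Nat.pair n t) = 0

theorem SemidecidableIn.recursiveIn_chi {O : ℕ →. ℕ} {X : Set ℕ}
    (hX : SemidecidableIn O (· ∈ X)) (hXc : SemidecidableIn O (· ∉ X)) :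
    RecursiveIn O (chi X) := by
  obtain ⟨⟨q, hq, mem_iff⟩, ⟨q', hq', notMem_iff⟩⟩ := hX, hXc
  have hmul : RecursiveIn O (toPFun fun z => q z * q' z) :=
    RecursiveIn.toPFun_comp₂ Primrec.nat_mul.to_comp hq hq'
  have hex (n : ℕ) : ∃ t, q (Nat.pair n t) * q' (Nat.pair n t) = 0 := by
    by_cases hn : n ∈ X
    · exact ((mem_iff n).1 hn).imp fun t ht => by rw [ht, zero_mul]
    · exact ((notMem_iff n).1 hn).imp fun t ht => by rw [ht, mul_zero]
  have hchi : chi X = toPFun fun n => 1 - q (Nat.pair n (Nat.find (hex n))) := by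
    funext n
    rw [chi, toPFun]
    have hzero := Nat.find_spec (hex n)
    by_cases hn : n ∈ X
    · have hq'n : q' (Nat.pair n (Nat.find (hex n))) ≠ 0 :=
        fun h0 => (notMem_iff n).2 ⟨_, h0⟩ hn
      rw [(mul_eq_zero.1 hzero).resolve_right hq'n, Set.indicator_of_mem hn, Nat.sub_zero]
    · have hqn : q (Nat.pair n (Nat.find (hex n))) ≠ 0 := fun h0 => hn ((mem_iff n).2 ⟨_, h0⟩)
      rw [Set.indicator_of_notMem hn, Nat.sub_eq_zero_of_le (Nat.one_le_iff_ne_zero.2 hqn)]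
  rw [hchi]
  exact RecursiveIn.toPFun_comp₂ Primrec.nat_sub.to_comp
    (RecursiveIn.toPFun_of_computable (Computable.const 1)) <|
    hq.toPFun_comp ((RecursiveIn.toPFun_of_computable Computable.id).toPFun_pair
      (hmul.toPFun_find hex))

/-! ### Continuity of relative computation -/

theorem eventually_mem_evalo {ι : Type*} {l : Filter ι} {A : ι → ℕ →. ℕ} {O : ℕ →. ℕ}
    (hA : ∀ x y, y ∈ O x → ∀ᶠ i in l, y ∈ A i x) (c : OCode) (x y : ℕ) (hy : y ∈ evalo O c x) :
    ∀ᶠ i in l, y ∈ evalo (A i) c x := by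
  induction c generalizing x y with
  | zero | succ | left | right => exact Eventually.of_forall fun _ => hy
  | oracle => exact hA x y hy
  | pair a b ha hb =>
    obtain ⟨u, hu, v, hv, rfl⟩ := mem_evalo_pair.1 hy
    filter_upwards [ha x u hu, hb x v hv] with i hu hv
    exact mem_evalo_pair.2 ⟨u, hu, v, hv, rfl⟩
  | comp a b ha hb =>
    obtain ⟨u, hu, hy⟩ := mem_evalo_comp.1 hy
    filter_upwards [hb x u hu, ha u y hy] with i hu hy
    exact mem_evalo_comp.2 ⟨u, hu, hy⟩
  | prec a b ha hb =>
    obtain ⟨p, n, rfl⟩ : ∃ p n, x = Nat.pair p n := ⟨_, _, (Nat.pair_unpair x).symm⟩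
    induction n generalizing y with
    | zero =>
      filter_upwards [ha p y (mem_evalo_prec_zero.1 hy)] with i hy
      exact mem_evalo_prec_zero.2 hy
    | succ n ih =>
      obtain ⟨u, hu, hy⟩ := mem_evalo_prec_succ.1 hy
      filter_upwards [ih u hu, hb _ y hy] with i hu hy
      exact mem_evalo_prec_succ.2 ⟨u, hu, hy⟩
  | rfind' a ha =>
    obtain ⟨p, m, rfl⟩ : ∃ p m, x = Nat.pair p m := ⟨_, _, (Nat.pair_unpair x).symm⟩
    obtain ⟨n, ⟨hzero, hpos⟩, rfl⟩ := mem_evalo_rfind'.1 hy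
    have eventually_pos : ∀ᶠ i in l, ∀ k ∈ Set.Iio n,
        ∃ z ∈ evalo (A i) a (Nat.pair p (k + m)), z ≠ 0 := by
      refine (eventually_all_finite (Set.finite_Iio n)).2 fun k hk => ?_
      obtain ⟨z, hz, hz0⟩ := hpos k hk
      exact (ha _ z hz).mono fun i hz => ⟨z, hz, hz0⟩
    filter_upwards [ha _ 0 hzero, eventually_pos] with i hzero hpos
    exact mem_evalo_rfind'.2 ⟨n, ⟨hzero, hpos⟩, rfl⟩

theorem evalo_mono {O P : ℕ →. ℕ} (hOP : ∀ x y, y ∈ O x → y ∈ P x) (c : OCode) (x y : ℕ)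
    (hy : y ∈ evalo O c x) : y ∈ evalo P c x :=
  (eventually_const (f := (atTop : Filter ℕ))).1 <| eventually_mem_evalo (A := fun _ => P)
    (fun x y h => eventually_const.2 (hOP x y h)) c x y hy

/-- The restrictions `A w` of `O` exhaust `O`: the approximation of an oracle by finite pieces of
it. The sequence `A` need not be increasing. -/
structure Approximates (A : ℕ → ℕ →. ℕ) (O : ℕ →. ℕ) : Prop where
  mem_of_mem : ∀ w x y, y ∈ A w x → y ∈ O x
  eventually_mem : ∀ x y, y ∈ O x → ∀ᶠ w in atTop, y ∈ A w x

namespace Approximates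

variable {A B : ℕ → ℕ →. ℕ} {O P : ℕ →. ℕ}

protected theorem pjoin (hA : Approximates A O) (hB : Approximates B P) :
    Approximates (fun w => pjoin (A w) (B w)) (pjoin O P) := by
  refine ⟨fun w x y => ?_, fun x y => ?_⟩ <;> by_cases hx : x % 2 = 0 <;>
    simp only [PCAEmb.pjoin, hx, if_true, if_false]
  exacts [hA.1 _ _ _, hB.1 _ _ _, hA.2 _ _, hB.2 _ _]

protected theorem evalo (hA : Approximates A O) (c : OCode) :
    Approximates (fun w => evalo (A w) c) (evalo O c) :=
  ⟨fun w => evalo_mono (hA.mem_of_mem w) c, eventually_mem_evalo hA.eventually_mem c⟩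

end Approximates

/-- The initial segment `g 0, …, g (w - 1)`. -/
def initSeg (g : ℕ → ℕ) (w : ℕ) : List ℕ := (List.range w).map g

theorem approximates_initSeg (g : ℕ → ℕ) :
    Approximates (fun w x => Part.ofOption (initSeg g w)[x]?) (toPFun g) := by
  have mem_iff (w x y : ℕ) : y ∈ Part.ofOption (initSeg g w)[x]? ↔ x < w ∧ g x = y := by
    simp [initSeg, List.getElem?_eq_some_iff]
  refine ⟨fun w x y hy => ?_, fun x y hy => ?_⟩
  · exact Part.mem_some_iff.2 ((mem_iff w x y).1 hy).2.symm
  · filter_upwards [eventually_gt_atTop x] with w hw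
    exact (mem_iff w x y).2 ⟨hw, (Part.mem_some_iff.1 hy).symm⟩

theorem recursiveIn_encode_initSeg (g : ℕ → ℕ) :
    RecursiveIn (toPFun g) (toPFun fun w => encode (initSeg g w)) := by
  let snoc (i a : ℕ) : ℕ := encode (Denumerable.ofNat (List ℕ) i ++ [a])
  have hsnoc : Computable₂ snoc := Computable.encode.comp <| Computable.list_concat.comp
    ((Computable.ofNat (List ℕ)).comp Computable.fst) Computable.snd
  have hstep : RecursiveIn (toPFun g) (toPFun (Nat.unpaired fun k i => snoc i (g k))) :=
    .toPFun_comp₂ hsnoc (.toPFun_of_computable (Computable.snd.comp Computable.unpair))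
      ((RecursiveIn.refl (toPFun g)).toPFun_comp
        (.toPFun_of_computable (Computable.fst.comp Computable.unpair)))
  have encode_initSeg (w : ℕ) :
      encode (initSeg g w) = Nat.rec (encode ([] : List ℕ)) (fun k i => snoc i (g k)) w := by
    induction w with
    | zero => rfl
    | succ w ih =>
      simp only [← ih, snoc, initSeg, List.range_succ, List.map_append, List.map_singleton,
        Denumerable.ofNat_encode]
  simpa only [encode_initSeg] using RecursiveIn.toPFun_natRec _ hstep

theorem recursiveIn_comp_initSeg (g : ℕ → ℕ) {u : ℕ → ℕ} {r : List ℕ → ℕ → ℕ}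
    (hu : Computable u) (hr : Computable₂ r) :
    RecursiveIn (toPFun g) (toPFun fun z => r (initSeg g (u z)) z) := by
  have hr' : Computable₂ fun l z : ℕ => r (Denumerable.ofNat (List ℕ) l) z :=
    hr.comp ((Computable.ofNat (List ℕ)).comp Computable.fst) Computable.snd
  simpa only [Denumerable.ofNat_encode, id_eq] using RecursiveIn.toPFun_comp₂ hr'
    ((recursiveIn_encode_initSeg g).toPFun_comp (.toPFun_of_computable hu))
    (.toPFun_of_computable Computable.id)

/-! ### Effective operators and uniformly computable sequences -/

theorem exists_computable_eval_eq {α : Type*} [Primcodable α] {ψ : α → ℕ →. ℕ}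
    (hψ : Partrec₂ ψ) : ∃ t : α → Code, Computable t ∧ ∀ a, (t a).eval = ψ a := by
  obtain ⟨c, hc⟩ := Code.exists_code.1 hψ
  refine ⟨fun a => c.curry (encode a),
    (Code.primrec₂_curry.comp (Primrec.const c) Primrec.encode).to_comp,
    fun a => funext fun x => ?_⟩
  rw [Code.eval_curry, hc, show Nat.pair (encode a) x = encode (a, x) from rfl]
  simp only [encodek, Part.coe_some, Part.bind_some]
  exact Part.map_id' (fun _ => rfl) _

theorem exists_computable_eval_eq_evalo (c : OCode) :
    ∃ t : Code → Code, Computable t ∧ ∀ d, (t d).eval = evalo d.eval c := by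
  induction c with
  | zero => exact ⟨fun _ => .zero, Computable.const _, fun _ => rfl⟩
  | succ => exact ⟨fun _ => .succ, Computable.const _, fun _ => rfl⟩
  | left => exact ⟨fun _ => .left, Computable.const _, fun _ => rfl⟩
  | right => exact ⟨fun _ => .right, Computable.const _, fun _ => rfl⟩
  | oracle => exact ⟨id, Computable.id, fun _ => rfl⟩
  | pair _ _ ha hb =>
    obtain ⟨⟨s, hs, hs'⟩, ⟨t, ht, ht'⟩⟩ := ha, hb
    exact ⟨fun d => .pair (s d) (t d), Code.primrec₂_pair.to_comp.comp hs ht,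
      fun d => by rw [evalo, ← hs', ← ht']; rfl⟩
  | comp _ _ ha hb =>
    obtain ⟨⟨s, hs, hs'⟩, ⟨t, ht, ht'⟩⟩ := ha, hb
    exact ⟨fun d => .comp (s d) (t d), Code.primrec₂_comp.to_comp.comp hs ht,
      fun d => by rw [evalo, ← hs', ← ht']; rfl⟩
  | prec _ _ ha hb =>
    obtain ⟨⟨s, hs, hs'⟩, ⟨t, ht, ht'⟩⟩ := ha, hb
    exact ⟨fun d => .prec (s d) (t d), Code.primrec₂_prec.to_comp.comp hs ht,
      fun d => by rw [evalo, ← hs', ← ht']; rfl⟩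
  | rfind' _ ha =>
    obtain ⟨s, hs, hs'⟩ := ha
    exact ⟨fun d => .rfind' (s d), Code.primrec_rfind'.to_comp.comp hs,
      fun d => by rw [evalo, ← hs']; rfl⟩

theorem exists_computable₂_eval_eq_pjoin :
    ∃ t : Code → Code → Code, Computable₂ t ∧ ∀ a b, (t a b).eval = pjoin a.eval b.eval := by
  have hhalf : Computable fun q : (Code × Code) × ℕ => q.2 / 2 :=
    (Primrec.nat_div.comp Primrec.snd (Primrec.const 2)).to_comp
  have heven : Computable fun q : (Code × Code) × ℕ => decide (q.2 % 2 = 0) :=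
    (Primrec.eq.decide.comp (Primrec.nat_mod.comp Primrec.snd (Primrec.const 2))
      (Primrec.const 0)).to_comp
  have hjoin : Partrec₂ fun q : Code × Code => pjoin q.1.eval q.2.eval :=
    (Partrec.cond heven (Code.eval_part.comp (Computable.fst.comp Computable.fst) hhalf)
      (Code.eval_part.comp (Computable.snd.comp Computable.fst) hhalf)).of_eq fun q => by
        by_cases hq : q.2 % 2 = 0 <;> simp [pjoin, hq]
  obtain ⟨t, ht, ht'⟩ := exists_computable_eval_eq hjoin
  exact ⟨fun a b => t (a, b), ht, fun a b => ht' (a, b)⟩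

theorem exists_approximates_of_recursiveIn {g : ℕ → ℕ} {ψ : ℕ →. ℕ}
    (hψ : RecursiveIn (toPFun g) ψ) :
    ∃ t : List ℕ → Code, Computable t ∧ Approximates (fun w => (t (initSeg g w)).eval) ψ := by
  obtain ⟨c, rfl⟩ := hψ
  have hlookup : Partrec₂ fun (l : List ℕ) (x : ℕ) => Part.ofOption l[x]? :=
    Computable.ofOption Computable.list_getElem?
  obtain ⟨s, hs, hs'⟩ := exists_computable_eval_eq hlookup
  obtain ⟨t, ht, ht'⟩ := exists_computable_eval_eq_evalo c
  refine ⟨fun l => t (s l), ht.comp hs, ?_⟩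
  simpa only [ht', hs'] using (approximates_initSeg g).evalo c

/-- `T` is an effective operator relative to `g`: it acts on codes of approximations, computably
in a finite initial segment of `g`. -/
def EffectiveOperator (g : ℕ → ℕ) (T : (ℕ →. ℕ) → ℕ →. ℕ) : Prop :=
  ∃ t : List ℕ → Code → Code, Computable₂ t ∧ ∀ (d : ℕ → Code) (ρ : ℕ →. ℕ),
    Approximates (fun w => (d w).eval) ρ →
      Approximates (fun w => (t (initSeg g w) (d w)).eval) (T ρ)

theorem effectiveOperator_evalo_pjoin {g : ℕ → ℕ} {θ : ℕ →. ℕ} (hθ : RecursiveIn (toPFun g) θ)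
    (c : OCode) : EffectiveOperator g fun ρ => evalo (pjoin θ ρ) c := by
  obtain ⟨s, hs, hsθ⟩ := exists_approximates_of_recursiveIn hθ
  obtain ⟨j, hj, hj'⟩ := exists_computable₂_eval_eq_pjoin
  obtain ⟨t, ht, ht'⟩ := exists_computable_eval_eq_evalo c
  refine ⟨fun l d => t (j (s l) d),
    ht.comp (hj.comp (hs.comp Computable.fst) Computable.snd), fun d ρ hd => ?_⟩
  simpa only [ht', hj'] using (hsθ.pjoin hd).evalo c

/-- `F 0, F 1, …` is a uniformly computable sequence of partial functions relative to `g`: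
from `n` and finite initial segments of `g` one computes codes of approximations of `F n`. -/
def UniformlyRecursiveIn (g : ℕ → ℕ) (F : ℕ → ℕ →. ℕ) : Prop :=
  ∃ C : List ℕ → ℕ → Code, Computable₂ C ∧
    ∀ n, Approximates (fun w => (C (initSeg g w) n).eval) (F n)

theorem EffectiveOperator.uniformlyRecursiveIn_iterate {g : ℕ → ℕ} {T : (ℕ →. ℕ) → ℕ →. ℕ}
    {ψ : ℕ →. ℕ} (hT : EffectiveOperator g T) (hψ : RecursiveIn (toPFun g) ψ) :
    UniformlyRecursiveIn g fun n => T^[n] ψ := by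
  obtain ⟨t, ht, htT⟩ := hT
  obtain ⟨s, hs, hsψ⟩ := exists_approximates_of_recursiveIn hψ
  refine ⟨fun l n => Nat.rec (s l) (fun _ d => t l d) n, ?_, fun n => ?_⟩
  · exact Computable.nat_rec Computable.snd (hs.comp Computable.fst)
      (ht.comp (Computable.fst.comp Computable.fst) (Computable.snd.comp Computable.snd)).to₂
  · induction n with
    | zero => exact hsψ
    | succ n ih =>
      simpa only [Function.iterate_succ_apply'] using htT _ _ ih

namespace UniformlyRecursiveIn

variable {g : ℕ → ℕ} {F : ℕ → ℕ →. ℕ}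

theorem map {T : (ℕ →. ℕ) → ℕ →. ℕ} (hF : UniformlyRecursiveIn g F)
    (hT : EffectiveOperator g T) : UniformlyRecursiveIn g fun n => T (F n) := by
  obtain ⟨⟨C, hC, hCF⟩, ⟨t, ht, htT⟩⟩ := hF, hT
  exact ⟨fun l n => t l (C l n), ht.comp Computable.fst hC, fun n => htT _ _ (hCF n)⟩

theorem semidecidableIn_mem (hF : UniformlyRecursiveIn g F) (m v : ℕ) :
    SemidecidableIn (toPFun g) fun n => v ∈ F n m := by
  obtain ⟨C, hC, hCF⟩ := hF
  let u (z : ℕ) : ℕ := z.unpair.2.unpair.1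
  let r (l : List ℕ) (z : ℕ) : ℕ :=
    bif Code.evaln z.unpair.2.unpair.2 (C l z.unpair.1) m = some v then 0 else 1
  have hu : Computable u := (Primrec.fst.comp <| Primrec.unpair.comp <|
    Primrec.snd.comp Primrec.unpair).to_comp
  have hr : Computable₂ r := by
    have hw : Computable fun q : List ℕ × ℕ => q.2.unpair.2.unpair.2 :=
      (Primrec.snd.comp <| Primrec.unpair.comp <| Primrec.snd.comp <| Primrec.unpair.comp
        Primrec.snd).to_comp
    have hn : Computable fun q : List ℕ × ℕ => q.2.unpair.1 :=
      (Primrec.fst.comp <| Primrec.unpair.comp Primrec.snd).to_comp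
    have heval := Code.primrec_evaln.to_comp.comp
      ((hw.pair (hC.comp Computable.fst hn)).pair (Computable.const m))
    exact Computable.cond (Primrec.eq.decide.to_comp.comp heval (Computable.const (some v)))
      (Computable.const 0) (Computable.const 1)
  refine ⟨fun z => r (initSeg g (u z)) z, recursiveIn_comp_initSeg g hu hr, fun n => ?_⟩
  have zero_iff (w k : ℕ) :
      r (initSeg g (u (Nat.pair n (Nat.pair w k)))) (Nat.pair n (Nat.pair w k)) = 0 ↔
        v ∈ Code.evaln k (C (initSeg g w) n) m := by
    simp [r, u, Bool.cond_decide]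
  constructor
  · intro hv
    obtain ⟨w, hw⟩ := ((hCF n).eventually_mem m v hv).exists
    obtain ⟨k, hk⟩ := Code.evaln_complete.1 hw
    exact ⟨Nat.pair w k, (zero_iff w k).2 hk⟩
  · rintro ⟨t, ht⟩
    rw [← Nat.pair_unpair t, zero_iff] at ht
    exact (hCF n).mem_of_mem _ m v (Code.evaln_sound ht)

end UniformlyRecursiveIn

/-! ### Numerals in `B^X` -/

/-- Application of van Oosten's model as a total operation: `bApp θ ρ` is `appFun θ ρ`. -/
def appFun (θ ρ : ℕ →. ℕ) : ℕ →. ℕ := fun n => (θ 0).bind fun e => phi (pjoin θ ρ) e n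

theorem exists_appFun_eq_evalo (θ : ℕ →. ℕ) :
    ∃ c : OCode, appFun θ = fun ρ => evalo (pjoin θ ρ) c := by
  rcases Part.eq_none_or_eq_some (θ 0) with h | ⟨e, h⟩
  · obtain ⟨c, hc⟩ := exists_forall_evalo_eq Nat.Partrec.none
    exact ⟨c, by funext ρ n; rw [appFun, h, hc, Part.bind_none]⟩
  · exact ⟨OCode.ofNat e, by funext ρ n; rw [appFun, h, Part.bind_some, phi]⟩

theorem effectiveOperator_appFun {g : ℕ → ℕ} {θ : ℕ →. ℕ} (hθ : RecursiveIn (toPFun g) θ) :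
    EffectiveOperator g (appFun θ) := by
  obtain ⟨c, hc⟩ := exists_appFun_eq_evalo θ
  exact hc ▸ effectiveOperator_evalo_pjoin hθ c

theorem mem_bXApp {X : Set ℕ} {a b c : Bel X} : c ∈ bXApp X a b ↔ c.1 = appFun a.1 b.1 := by
  have hdef : bXApp X a b = Part.assert (RecursiveIn (chi X) (appFun a.1 b.1))
      fun h => Part.some ⟨_, h⟩ := by
    unfold bXApp subApp
    exact Part.bind_some _ _
  rw [hdef, Part.mem_assert_iff]
  constructor
  · rintro ⟨h, hc⟩
    exact congrArg Subtype.val (Part.mem_some_iff.1 hc)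
  · intro hc
    exact ⟨hc ▸ c.2, Part.mem_some_iff.2 (Subtype.ext hc)⟩

/-- The element of `B^X` representing `i`: the constant function with value `i`. -/
def numeral (X : Set ℕ) (i : ℕ) : Bel X :=
  ⟨toPFun fun _ => i, .toPFun_of_computable (Computable.const i)⟩

theorem numeral_injective (X : Set ℕ) : Function.Injective (numeral X) := fun _ _ h =>
  Part.some_injective (congrFun (congrArg Subtype.val h) 0)

theorem exists_appFun_numeral_eq {X : Set ℕ} {ψ : ℕ →. ℕ} (hψ : RecursiveIn (chi X) ψ) :
    ∃ D : Bel X, ∀ n, appFun D.1 (numeral X n).1 = fun x => ψ (Nat.pair n x) := by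
  -- `D` stores its own index `e` at `0` and `ψ k` at `k + 1`, so that the joined oracle gives
  -- `n` at `1` and `ψ k` at `2 * (k + 1)`.
  obtain ⟨c, hc⟩ := exists_forall_evalo_eq_some (h := fun k => 2 * (k + 1))
    (Primrec.nat_mul.comp (Primrec.const 2) Primrec.succ).to_comp
  obtain ⟨d, hd⟩ := exists_forall_evalo_eq_some (Computable.const 1)
  obtain ⟨i, hi⟩ := exists_forall_evalo_eq_some Computable.id
  obtain ⟨e, he⟩ := OCode.ofNat_surjective
    (.comp .oracle (.comp c (.pair (.comp .oracle d) i)))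
  let θ : ℕ →. ℕ := fun k => if k = 0 then Part.some e else ψ k.pred
  have hθ : RecursiveIn (chi X) θ :=
    (RecursiveIn.toPFun_of_computable (Computable.const e)).ite
      (hψ.comp (RecursiveIn.toPFun_of_computable Computable.pred))
      (RecursiveIn.toPFun_of_computable Computable.id)
  refine ⟨⟨θ, hθ⟩, fun n => funext fun x => ?_⟩
  have hθ0 : θ 0 = Part.some e := if_pos rfl
  have hone : pjoin θ (numeral X n).1 1 = Part.some n := rfl
  have heven (k : ℕ) : pjoin θ (numeral X n).1 (2 * (k + 1)) = ψ k := by simp [pjoin, θ]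
  simp only [appFun, hθ0, Part.bind_some, phi, he]
  refine Part.ext fun y => ?_
  simp [mem_evalo_comp, mem_evalo_pair, mem_evalo_oracle, hc, hd, hi, hone, heven]

/-! ### Homomorphisms from `B^X` to `B^Y` -/

/-- A homomorphism of partial applicative structures: an embedding without the injectivity. -/
def IsPCAHom {α β : Type*} (appA : α → α → Part α) (appB : β → β → Part β) (f : α → β) : Prop :=
  ∀ a a' c : α, c ∈ appA a a' → f c ∈ appB (f a) (f a')

theorem exists_mem_bXApp_numeral_ite {X : Set ℕ} (a b : Bel X) :
    ∃ D : Bel X, (∀ n ∈ X, a ∈ bXApp X D (numeral X n)) ∧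
      ∀ n ∉ X, b ∈ bXApp X D (numeral X n) := by
  have hfst : RecursiveIn (chi X) (toPFun fun z => X.indicator (fun _ => 1) z.unpair.1) :=
    (RecursiveIn.refl (chi X)).comp
      (RecursiveIn.toPFun_of_computable (Computable.fst.comp Computable.unpair))
  have hsnd {θ : ℕ →. ℕ} (hθ : RecursiveIn (chi X) θ) :
      RecursiveIn (chi X) fun z => θ z.unpair.2 :=
    hθ.comp (RecursiveIn.toPFun_of_computable (Computable.snd.comp Computable.unpair))
  obtain ⟨D, hD⟩ := exists_appFun_numeral_eq ((hsnd b.2).ite (hsnd a.2) hfst)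
  refine ⟨D, fun n hn => mem_bXApp.2 ?_, fun n hn => mem_bXApp.2 ?_⟩ <;> rw [hD] <;> simp [hn]

theorem exists_succ_mem_bXApp (X : Set ℕ) :
    ∃ S : Bel X, ∀ n, numeral X (n + 1) ∈ bXApp X S (numeral X n) := by
  obtain ⟨S, hS⟩ := exists_appFun_numeral_eq (X := X) (RecursiveIn.toPFun_of_computable
    (Computable.succ.comp (Computable.fst.comp Computable.unpair)))
  exact ⟨S, fun n => mem_bXApp.2 <| .symm <| (hS n).trans <| funext fun x =>
    congrArg (fun q : ℕ × ℕ => Part.some (q.1 + 1)) (Nat.unpair_pair n x)⟩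

namespace IsPCAHom

variable {X Y : Set ℕ} {f : Bel X → Bel Y}

theorem uniformlyRecursiveIn_numeral (hf : IsPCAHom (bXApp X) (bXApp Y) f) :
    UniformlyRecursiveIn (Y.indicator fun _ => 1) fun n => (f (numeral X n)).1 := by
  obtain ⟨S, hS⟩ := exists_succ_mem_bXApp X
  have numeral_eq (n : ℕ) : (f (numeral X n)).1 = (appFun (f S).1)^[n] (f (numeral X 0)).1 := by
    induction n with
    | zero => rfl
    | succ n ih =>
      rw [Function.iterate_succ_apply', ← ih]
      exact mem_bXApp.1 (hf _ _ _ (hS n))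
  rw [funext numeral_eq]
  exact (effectiveOperator_appFun (f S).2).uniformlyRecursiveIn_iterate (f (numeral X 0)).2

theorem semidecidableIn (hf : IsPCAHom (bXApp X) (bXApp Y) f) {P : ℕ → Prop} {D a b : Bel X}
    {m v : ℕ} (hP : ∀ n, P n → a ∈ bXApp X D (numeral X n))
    (hP' : ∀ n, ¬P n → b ∈ bXApp X D (numeral X n))
    (ha : v ∈ (f a).1 m) (hb : v ∉ (f b).1 m) : SemidecidableIn (chi Y) P := by
  have hF : UniformlyRecursiveIn (Y.indicator fun _ => 1)
      fun n => appFun (f D).1 (f (numeral X n)).1 :=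
    hf.uniformlyRecursiveIn_numeral.map (effectiveOperator_appFun (f D).2)
  have mem_iff (n : ℕ) : v ∈ appFun (f D).1 (f (numeral X n)).1 m ↔ P n := by
    by_cases hn : P n
    · rw [← mem_bXApp.1 (hf _ _ _ (hP n hn))]
      exact iff_of_true ha hn
    · rw [← mem_bXApp.1 (hf _ _ _ (hP' n hn))]
      exact iff_of_false hb hn
  exact funext (fun n => propext (mem_iff n)) ▸ hF.semidecidableIn_mem m v

theorem turingLE_of_separates (hf : IsPCAHom (bXApp X) (bXApp Y) f) {a b : Bel X} {m v : ℕ}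
    (ha : v ∈ (f a).1 m) (hb : v ∉ (f b).1 m) : TuringLE X Y := by
  obtain ⟨D, hD, hD'⟩ := exists_mem_bXApp_numeral_ite a b
  obtain ⟨E, hE, hE'⟩ := exists_mem_bXApp_numeral_ite b a
  have hX : SemidecidableIn (chi Y) (· ∈ X) := hf.semidecidableIn hD hD' ha hb
  have hXc : SemidecidableIn (chi Y) (· ∉ X) :=
    hf.semidecidableIn hE' (fun n hn => hE n (not_not.1 hn)) ha hb
  exact hX.recursiveIn_chi hXc

theorem turingLE_of_ne (hf : IsPCAHom (bXApp X) (bXApp Y) f) {a b : Bel X} (hab : f a ≠ f b) :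
    TuringLE X Y := by
  by_contra hXY
  refine hab (Subtype.ext (funext fun m => Part.ext fun v => ⟨fun hv => ?_, fun hv => ?_⟩))
  · exact by_contra fun hv' => hXY (hf.turingLE_of_separates hv hv')
  · exact by_contra fun hv' => hXY (hf.turingLE_of_separates hv hv')

end IsPCAHom

theorem TuringLE.exists_isPCAEmbedding {X Y : Set ℕ} (hXY : TuringLE X Y) :
    ∃ f : Bel X → Bel Y, IsPCAEmbedding (bXApp X) (bXApp Y) f :=
  ⟨fun a => ⟨a.1, RecursiveIn.trans hXY a.2⟩,
    fun _ _ hab => Subtype.ext (Subtype.mk.inj hab),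
    fun _ _ _ hc => mem_bXApp.2 (mem_bXApp (X := X).1 hc)⟩

theorem stmt12_general (X Y : Set ℕ) :
    [∃ f : Bel X → Bel Y, IsPCAEmbedding (bXApp X) (bXApp Y) f,
      ∃ f : Bel X → Bel Y, IsPCAHom (bXApp X) (bXApp Y) f ∧ ∃ a b, f a ≠ f b,
      TuringLE X Y].TFAE := by
  tfae_have 1 → 2 := fun ⟨f, hinj, hf⟩ =>
    ⟨f, hf, numeral X 0, numeral X 1, hinj.ne ((numeral_injective X).ne zero_ne_one)⟩
  tfae_have 2 → 3 := fun ⟨_, hf, _, _, hab⟩ => hf.turingLE_of_ne hab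
  tfae_have 3 → 1 := TuringLE.exists_isPCAEmbedding
  tfae_finish

theorem stmt12 (X Y : Set ℕ) :
    (∃ f : Bel X → Bel Y, IsPCAEmbedding (bXApp X) (bXApp Y) f) ↔
      TuringLE X Y :=
  (stmt12_general X Y).out 0 2

end PCAEmb
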